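/- Let n, t, d ∈ ℕ with t ≥ 1 and d ≤ n − 1, and let Σ be an n×n positive semidefinite real matrix with eigenvalues λ₁ ≤ … ≤ λₙ and λₙ > 0. Set α := (1/(7√t))·√(λ_{d+1}/λₙ). Then 𝒩_{t,α}(Σ) ≤ t·(7t)^{2t²+t}·dᵗ + n. -/

import Mathlib

open Matrix MeasureTheory ProbabilityTheory
open scoped BigOperators ENNReal

noncomputable section

/-- `v` has at most `t` nonzero coordinates. -/
def SparseVec {k : ℕ} (t : ℕ) (v : Fin k → ℝ) : Prop := {i | v i ≠ 0}.ncard ≤ t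

/-- ⟨x,y⟩_Σ := xᵀ Σ y. -/
def innerSigma {k : ℕ} (A : Matrix (Fin k) (Fin k) ℝ) (x y : Fin k → ℝ) : ℝ := x ⬝ᵥ (A *ᵥ y)

/-- ‖x‖_Σ := √(xᵀ Σ x). -/
def normSigma {k : ℕ} (A : Matrix (Fin k) (Fin k) ℝ) (x : Fin k → ℝ) : ℝ :=
  Real.sqrt (innerSigma A x x)

/-- Euclidean norm on ℝ^k. -/
def l2norm {k : ℕ} (v : Fin k → ℝ) : ℝ := Real.sqrt (∑ i, v i ^ 2)

/-- ℓ1 norm on ℝ^k. -/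
def l1norm {k : ℕ} (v : Fin k → ℝ) : ℝ := ∑ i, |v i|

/-- `D` is a `(t,α)`-dictionary for `A`: every `t`-sparse `v` with ‖v‖_Σ > 0 correlates
with some element of `D` at level `α` under the Σ-inner product. -/
def IsDictionary {k : ℕ} (t : ℕ) (α : ℝ) (A : Matrix (Fin k) (Fin k) ℝ) {N : ℕ}
    (D : Fin N → Fin k → ℝ) : Prop :=
  ∀ v : Fin k → ℝ, SparseVec t v → 0 < normSigma A v →
    ∃ i, 0 < normSigma A (D i) ∧ α * (normSigma A v * normSigma A (D i)) ≤ |innerSigma A v (D i)|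

/-- 𝒩_{t,α}(Σ): the minimum size of a `(t,α)`-dictionary (as an element of ℕ ∪ {∞}). -/
def coveringNumber {k : ℕ} (t : ℕ) (α : ℝ) (A : Matrix (Fin k) (Fin k) ℝ) : ℝ≥0∞ :=
  sInf {c : ℝ≥0∞ | ∃ (N : ℕ) (D : Fin N → Fin k → ℝ), IsDictionary t α A D ∧ c = (N : ℝ≥0∞)}

/-!
Let `V` be the span of the eigenvectors whose eigenvalue lies below `λ_{d+1}`, so that `dim V ≤ d`
and every vector `w` satisfies `√λ_{d+1} ‖w - x‖₂ ≤ ‖w‖_Σ` for some `x ∈ V`. A coordinate is heavy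
for `V` if a unit vector of `V` has a large entry there; since the leverage scores
`‖P_V eᵢ‖²` sum to `dim V`, few coordinates are heavy. Removing the heavy coordinates `t + 1` times
yields a set `S` of at most `2t(t + 1)d` coordinates such that a `t`-sparse vector close to `V` has
little Euclidean mass outside `S`.

The dictionary consists of the unit vectors and, for every choice of at most `t` coordinates in `S`,
vectors that form a `Σ`-orthonormal basis of the corresponding coordinate subspace modulo the kernel
of `Σ`. Suppose that a `t`-sparse `v` correlates with none of its elements, and let `u` be the
`Σ`-projection of `v` onto the vectors supported on `S ∩ supp v`. Then `‖u‖_Σ` is small, `v - u` is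
`t`-sparse, and `‖v - u‖_Σ² = ⟨v - u, z⟩_Σ` where `z` is the restriction of `v` to `Sᶜ`. Both
`⟨v, z⟩_Σ` and `⟨u, z⟩_Σ` are small relative to `‖v‖_Σ √λ_{d+1} ‖z‖₂`, and
`√λ_{d+1} ‖z‖₂ ≤ 2 ‖v - u‖_Σ` by the choice of `S`; this forces `‖v‖_Σ = 0`.
-/

section Leverage

open scoped Finset RealInnerProductSpace

variable {ι : Type*} [Fintype ι]

lemma sum_norm_sq_starProjection_single [DecidableEq ι] (V : Submodule ℝ (EuclideanSpace ℝ ι)) :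
    ∑ i, ‖V.starProjection (EuclideanSpace.single i 1)‖ ^ 2 = Module.finrank ℝ V := by
  have hproj : LinearMap.IsProj V (V.starProjection : EuclideanSpace ℝ ι →ₗ[ℝ] _) :=
    ⟨V.starProjection_apply_mem, fun _ ↦ V.starProjection_eq_self_iff.2⟩
  rw [← hproj.trace, LinearMap.trace_eq_sum_inner _ (EuclideanSpace.basisFun ι ℝ)]
  refine Finset.sum_congr rfl fun i _ ↦ ?_
  rw [← real_inner_self_eq_norm_sq, V.inner_starProjection_left_eq_right,
    V.starProjection_eq_self_iff.2 (V.starProjection_apply_mem _), EuclideanSpace.basisFun_apply]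
  rfl

lemma sq_apply_le_norm_sq_starProjection_single [DecidableEq ι]
    {V : Submodule ℝ (EuclideanSpace ℝ ι)} {x : EuclideanSpace ℝ ι} (hx : x ∈ V) (i : ι) :
    x i ^ 2 ≤ ‖V.starProjection (EuclideanSpace.single i 1)‖ ^ 2 * ‖x‖ ^ 2 := by
  have hxi : x i = ⟪V.starProjection (EuclideanSpace.single i 1), x⟫ := by
    rw [V.inner_starProjection_left_eq_right, V.starProjection_eq_self_iff.2 hx]
    simp [EuclideanSpace.inner_single_left]
  rw [hxi, ← mul_pow, ← sq_abs]
  gcongr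
  exact abs_real_inner_le_norm _ _

-- The squared norms of the projections of the unit vectors onto `V` sum to `finrank ℝ V`, and each
-- `i ∈ S` contributes at least `1 / m`.
lemma card_le_mul_finrank_of_forall_exists {V : Submodule ℝ (EuclideanSpace ℝ ι)} {m : ℕ}
    {S : Finset ι} (hS : ∀ i ∈ S, ∃ x ∈ V, ‖x‖ ^ 2 < m * x i ^ 2) :
    #S ≤ m * Module.finrank ℝ V := by
  classical
  have one_le (i) (hi : i ∈ S) :
      1 ≤ m * ‖V.starProjection (EuclideanSpace.single i 1)‖ ^ 2 := by
    obtain ⟨x, hx, hlt⟩ := hS i hi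
    have hle := mul_le_mul_of_nonneg_left (sq_apply_le_norm_sq_starProjection_single hx i)
      (Nat.cast_nonneg (α := ℝ) m)
    by_contra! h
    nlinarith [sq_nonneg ‖x‖]
  have hcard : (#S : ℝ) ≤ m * Module.finrank ℝ V := calc
    (#S : ℝ) = ∑ i ∈ S, 1 := by simp
    _ ≤ ∑ i ∈ S, m * ‖V.starProjection (EuclideanSpace.single i 1)‖ ^ 2 :=
      Finset.sum_le_sum one_le
    _ ≤ ∑ i, m * ‖V.starProjection (EuclideanSpace.single i 1)‖ ^ 2 :=
      Finset.sum_le_univ_sum_of_nonneg fun i ↦ by positivity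
    _ = m * Module.finrank ℝ V := by
      rw [← Finset.mul_sum, sum_norm_sq_starProjection_single V]
  exact_mod_cast hcard

end Leverage

section Peeling

open scoped Finset

lemma exists_le_card_inter_succ_subset {ι : Type*} [DecidableEq ι] {T : ℕ → Finset ι}
    (hT : Monotone T) (U : Finset ι) : ∃ k ≤ #U, U ∩ T (k + 1) ⊆ T k := by
  by_contra! hgrow
  have le_card (k) (hk : k ≤ #U + 1) : k ≤ #(U ∩ T k) := by
    induction k with
    | zero => exact Nat.zero_le _
    | succ k ih =>
      have hssub : U ∩ T k ⊂ U ∩ T (k + 1) :=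
        ⟨Finset.inter_subset_inter_left (hT k.le_succ), fun hsub ↦
          hgrow k (by lia) (hsub.trans Finset.inter_subset_right)⟩
      exact (ih (by lia)).trans_lt (Finset.card_lt_card hssub)
  have hU : #(U ∩ T (#U + 1)) ≤ #U := Finset.card_le_card Finset.inter_subset_left
  have := le_card _ le_rfl
  lia

lemma mul_sum_le_of_card_le {ι : Type*} {s : Finset ι} {t : ℕ} (hs : #s ≤ t) {f : ι → ℝ}
    {a c : ℝ} (hf : ∀ i ∈ s, a * t * f i ≤ c) (hc : 0 ≤ c) : a * ∑ i ∈ s, f i ≤ c := by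
  obtain rfl | hne := s.eq_empty_or_nonempty
  · simpa using hc
  have ht : (0 : ℝ) < t := by exact_mod_cast hne.card_pos.trans_le hs
  refine le_of_mul_le_mul_left ?_ ht
  calc t * (a * ∑ i ∈ s, f i) = ∑ i ∈ s, a * t * f i := by rw [← Finset.mul_sum]; ring
    _ ≤ #s • c := Finset.sum_le_card_nsmul s _ c hf
    _ ≤ t * c := by rw [nsmul_eq_mul]; gcongr

lemma sum_sq_le_two_mul_sum_sq_sub {ι : Type*} [DecidableEq ι] {U R : Finset ι} {w x : ι → ℝ}
    (hw : ∀ i ∉ U, w i = 0) (hx : 2 * ∑ i ∈ R ∩ U, x i ^ 2 ≤ ∑ i ∈ R, x i ^ 2) :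
    ∑ i ∈ R, w i ^ 2 ≤ 2 * ∑ i ∈ R, (w i - x i) ^ 2 := by
  have split (f : ι → ℝ) := Finset.sum_inter_add_sum_sdiff R U f
  have hw_off : ∑ i ∈ R \ U, w i ^ 2 = 0 :=
    Finset.sum_eq_zero fun i hi ↦ by rw [hw i (Finset.mem_sdiff.1 hi).2, sq, zero_mul]
  have hx_off : ∑ i ∈ R \ U, x i ^ 2 = ∑ i ∈ R \ U, (w i - x i) ^ 2 :=
    Finset.sum_congr rfl fun i hi ↦ by rw [hw i (Finset.mem_sdiff.1 hi).2]; ring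
  have hw_on : ∑ i ∈ R ∩ U, w i ^ 2 ≤
      2 * ∑ i ∈ R ∩ U, x i ^ 2 + 2 * ∑ i ∈ R ∩ U, (w i - x i) ^ 2 := by
    rw [Finset.mul_sum, Finset.mul_sum, ← Finset.sum_add_distrib]
    exact Finset.sum_le_sum fun i _ ↦ by linarith [sq_nonneg (w i - 2 * x i)]
  linarith [split (w · ^ 2), split (x · ^ 2), split fun i ↦ (w i - x i) ^ 2]

variable {ι : Type*} [Fintype ι] [DecidableEq ι]

open scoped Classical in
/-- The coordinates `i ∉ T` that are heavy for the subspace `V` off `T`: some `x ∈ V` has more than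
a `1 / m` fraction of its squared Euclidean mass on `Tᶜ` concentrated at `i`. -/
def heavyCoords (m : ℕ) (V : Submodule ℝ (ι → ℝ)) (T : Finset ι) : Finset ι :=
  {i ∈ Tᶜ | ∃ x ∈ V, ∑ j ∈ Tᶜ, x j ^ 2 < m * x i ^ 2}

lemma card_heavyCoords_le (m : ℕ) (V : Submodule ℝ (ι → ℝ)) (T : Finset ι) :
    #(heavyCoords m V T) ≤ m * Module.finrank ℝ V := by
  let maskT : (ι → ℝ) →ₗ[ℝ] EuclideanSpace ℝ ι := (WithLp.linearEquiv 2 ℝ (ι → ℝ)).symm ∘ₗ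
    LinearMap.pi fun i ↦ if i ∈ T then 0 else LinearMap.proj i
  have maskT_apply (x : ι → ℝ) (i : ι) : maskT x i = if i ∈ T then 0 else x i := by
    by_cases hi : i ∈ T <;> simp [maskT, hi]
  refine (card_le_mul_finrank_of_forall_exists (V := V.map maskT) fun i hi ↦ ?_).trans
    (Nat.mul_le_mul_left m (Submodule.finrank_map_le maskT V))
  simp only [heavyCoords, Finset.mem_filter, Finset.mem_compl] at hi
  obtain ⟨hiT, x, hx, hlt⟩ := hi
  refine ⟨maskT x, Submodule.mem_map_of_mem hx, ?_⟩
  simpa [EuclideanSpace.real_norm_sq_eq, maskT_apply, hiT, ite_pow, Finset.sum_ite,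
    Finset.filter_notMem_eq_sdiff, ← Finset.compl_eq_univ_sdiff] using hlt

/-- The coordinates removed in the first `k` rounds of peeling, each round removing those that are
heavy for `V` off the previously removed ones. -/
def peel (m : ℕ) (V : Submodule ℝ (ι → ℝ)) : ℕ → Finset ι
  | 0 => ∅
  | k + 1 => peel m V k ∪ heavyCoords m V (peel m V k)

lemma card_peel_le (m : ℕ) (V : Submodule ℝ (ι → ℝ)) (k : ℕ) :
    #(peel m V k) ≤ k * (m * Module.finrank ℝ V) := by
  induction k with
  | zero => simp [peel]
  | succ k ih =>
    rw [add_one_mul]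
    exact (Finset.card_union_le _ _).trans (add_le_add ih (card_heavyCoords_le m V _))

lemma peel_mono (m : ℕ) (V : Submodule ℝ (ι → ℝ)) : Monotone (peel m V) :=
  monotone_nat_of_le_succ fun _ ↦ Finset.subset_union_left

lemma mul_sq_apply_le_of_notMem_peel {m k : ℕ} {V : Submodule ℝ (ι → ℝ)} {i : ι}
    (hi : i ∉ peel m V (k + 1)) {x : ι → ℝ} (hx : x ∈ V) :
    m * x i ^ 2 ≤ ∑ j ∈ (peel m V k)ᶜ, x j ^ 2 := by
  by_contra! hlt
  simp only [peel, heavyCoords, Finset.mem_union, Finset.mem_filter, Finset.mem_compl, not_or,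
    not_and] at hi
  exact hi.2 hi.1 ⟨x, hx, hlt⟩

-- Among the `t + 1` rounds there is one that removes no coordinate of the support `U` of `w`. The
-- coordinates of `U` surviving it are light for `x ∈ V`, so they carry at most half of the mass of
-- `x` there, and `x` cannot approximate `w` well.
lemma sum_sq_compl_peel_le {t : ℕ} {V : Submodule ℝ (ι → ℝ)} {U : Finset ι} (hU : #U ≤ t)
    {w x : ι → ℝ} (hw : ∀ i ∉ U, w i = 0) (hx : x ∈ V) :
    ∑ i ∈ (peel (2 * t) V (t + 1))ᶜ, w i ^ 2 ≤ 2 * ∑ i, (w i - x i) ^ 2 := by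
  obtain ⟨k, hkU, hk⟩ := exists_le_card_inter_succ_subset (peel_mono (2 * t) V) U
  set R := (peel (2 * t) V k)ᶜ
  have light (i) (hi : i ∈ R ∩ U) : 2 * t * x i ^ 2 ≤ ∑ j ∈ R, x j ^ 2 := by
    obtain ⟨hiR, hiU⟩ := Finset.mem_inter.1 hi
    have hi' : i ∉ peel (2 * t) V (k + 1) := fun h ↦
      Finset.mem_compl.1 hiR (hk (Finset.mem_inter.2 ⟨hiU, h⟩))
    exact_mod_cast mul_sq_apply_le_of_notMem_peel hi' hx
  have half : 2 * ∑ i ∈ R ∩ U, x i ^ 2 ≤ ∑ i ∈ R, x i ^ 2 :=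
    mul_sum_le_of_card_le ((Finset.card_le_card Finset.inter_subset_right).trans hU) light
      (Finset.sum_nonneg fun i _ ↦ sq_nonneg _)
  calc ∑ i ∈ (peel (2 * t) V (t + 1))ᶜ, w i ^ 2
    _ ≤ ∑ i ∈ R, w i ^ 2 := by
      gcongr
      exact Finset.compl_subset_compl.2 (peel_mono (2 * t) V (by lia : k ≤ t + 1))
    _ ≤ 2 * ∑ i ∈ R, (w i - x i) ^ 2 := sum_sq_le_two_mul_sum_sq_sub hw half
    _ ≤ 2 * ∑ i, (w i - x i) ^ 2 := by
      gcongr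
      exact Finset.subset_univ R

end Peeling

section Dictionary

open scoped Finset RealInnerProductSpace

variable {E F : Type*} [NormedAddCommGroup E] [InnerProductSpace ℝ E] [AddCommGroup F] [Module ℝ F]

lemma norm_starProjection_le {κ : Type*} [Fintype κ] {W : Submodule ℝ E}
    [W.HasOrthogonalProjection] (q : OrthonormalBasis κ ℝ W) {y : E} {c : ℝ} (hc : 0 ≤ c)
    (hq : ∀ j, |⟪y, (q j : E)⟫| ≤ c) : ‖W.starProjection y‖ ≤ √(Fintype.card κ) * c := by
  refine (q.norm_le_card_mul_iSup_norm_inner (W.orthogonalProjectionOnto y)).trans ?_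
  gcongr
  refine Real.iSup_le (fun j ↦ ?_) hc
  rw [Submodule.inner_orthogonalProjectionOnto_eq_of_mem_left, real_inner_comm]
  exact hq j

lemma exists_finset_card_le_finrank (φ : F →ₗ[ℝ] E) (X : Submodule ℝ F) [FiniteDimensional ℝ X] :
    ∃ B : Finset F, #B ≤ Module.finrank ℝ X ∧ ∀ y : E, ∃ u ∈ X,
      (∀ z ∈ X, ⟪y - φ u, φ z⟫ = 0) ∧
      ∀ c, 0 ≤ c → (∀ b ∈ B, |⟪y, φ b⟫| ≤ c * ‖φ b‖) → ‖φ u‖ ≤ √(Module.finrank ℝ X) * c := by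
  classical
  let W := X.map φ
  let q := stdOrthonormalBasis ℝ W
  choose pre pre_mem φ_pre using fun w : W ↦ Submodule.mem_map.1 w.2
  have finrank_le : Module.finrank ℝ W ≤ Module.finrank ℝ X := X.finrank_map_le φ
  refine ⟨Finset.univ.image (pre ∘ q), ?_, fun y ↦ ⟨pre (W.orthogonalProjectionOnto y), pre_mem _,
    fun z hz ↦ ?_, fun c hc hB ↦ ?_⟩⟩
  · exact (Finset.card_image_le.trans_eq (by simp)).trans finrank_le
  · rw [φ_pre]
    exact W.starProjection_inner_eq_zero y _ (Submodule.mem_map_of_mem hz)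
  · rw [φ_pre]
    refine (norm_starProjection_le q hc fun j ↦ ?_).trans ?_
    · have hj := hB _ (Finset.mem_image_of_mem (pre ∘ q) (Finset.mem_univ j))
      rwa [Function.comp_apply, φ_pre, Submodule.norm_coe, q.norm_eq_one, mul_one] at hj
    · rw [Fintype.card_fin]
      gcongr

lemma exists_image_univ_fin_eq {ι : Type*} [DecidableEq ι] {J : Finset ι} (hJ : J.Nonempty) {t : ℕ}
    (ht : #J ≤ t) : ∃ f : Fin t → ι, Finset.univ.image f = J := by
  have : Nonempty J := hJ.to_subtype
  obtain ⟨e⟩ : Nonempty (J ↪ Fin t) := Function.Embedding.nonempty_of_card_le (by simpa using ht)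
  refine ⟨Subtype.val ∘ Function.invFun e, ?_⟩
  rw [← Finset.image_image,
    Finset.image_univ_of_surjective (Function.invFun_surjective e.injective),
    Finset.univ_eq_attach, Finset.attach_image_val]

variable {ι : Type*}

/-- The subspace of vectors vanishing outside `J`, onto whose images the dictionary projects. -/
def supportedOn (J : Finset ι) : Submodule ℝ (ι → ℝ) := Submodule.pi (J : Set ι)ᶜ fun _ ↦ ⊥

lemma mem_supportedOn {J : Finset ι} {x : ι → ℝ} : x ∈ supportedOn J ↔ ∀ i ∉ J, x i = 0 := by
  simp [supportedOn, Submodule.mem_pi]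

lemma finrank_supportedOn_le [Finite ι] (J : Finset ι) :
    Module.finrank ℝ (supportedOn J) ≤ #J := by
  let restrict : supportedOn J →ₗ[ℝ] J → ℝ :=
    LinearMap.funLeft ℝ ℝ Subtype.val ∘ₗ Submodule.subtype _
  have restrict_injective : Function.Injective restrict := by
    refine (injective_iff_map_eq_zero restrict).2 fun x hx ↦ Subtype.ext (funext fun i ↦ ?_)
    by_cases hi : i ∈ J
    · exact congrFun hx ⟨i, hi⟩
    · exact mem_supportedOn.1 x.2 i hi
  simpa using LinearMap.finrank_le_finrank_of_injective restrict_injective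

lemma exists_finset_card_le_pow_mul [Finite ι] (φ : (ι → ℝ) →ₗ[ℝ] E) (S : Finset ι) (t : ℕ) :
    ∃ D : Finset (ι → ℝ), #D ≤ #S ^ t * t ∧ ∀ J ⊆ S, #J ≤ t → ∀ y : E, ∃ u ∈ supportedOn J,
      (∀ z ∈ supportedOn J, ⟪y - φ u, φ z⟫ = 0) ∧
      ∀ c, 0 ≤ c → (∀ b ∈ D, |⟪y, φ b⟫| ≤ c * ‖φ b‖) → ‖φ u‖ ≤ √t * c := by
  classical
  choose B card_B hB using fun J : Finset ι ↦ exists_finset_card_le_finrank φ (supportedOn J)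
  have finrank_le {J : Finset ι} (hJ : #J ≤ t) : Module.finrank ℝ (supportedOn J) ≤ t :=
    (finrank_supportedOn_le J).trans hJ
  refine ⟨(Fintype.piFinset fun _ : Fin t ↦ S).biUnion fun f ↦ B (Finset.univ.image f), ?_,
    fun J hJS hJt y ↦ ?_⟩
  · rw [← Fintype.card_piFinset_const]
    refine Finset.card_biUnion_le_card_mul _ _ _ fun f _ ↦ (card_B _).trans (finrank_le ?_)
    exact Finset.card_image_le.trans_eq (Finset.card_fin t)
  obtain rfl | hne := J.eq_empty_or_nonempty
  · refine ⟨0, zero_mem _, fun z hz ↦ ?_, fun c hc _ ↦ by rw [map_zero, norm_zero]; positivity⟩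
    obtain rfl : z = 0 := funext fun i ↦ mem_supportedOn.1 hz i (Finset.notMem_empty i)
    rw [map_zero, inner_zero_right]
  obtain ⟨f, rfl⟩ := exists_image_univ_fin_eq hne hJt
  obtain ⟨u, hu, horth, hbound⟩ := hB _ y
  refine ⟨u, hu, horth, fun c hc hD ↦ (hbound c hc fun b hb ↦ hD b ?_).trans ?_⟩
  · refine Finset.mem_biUnion.2 ⟨f, Fintype.mem_piFinset.2 fun k ↦ hJS ?_, hb⟩
    exact Finset.mem_image_of_mem f (Finset.mem_univ k)
  · gcongr
    exact finrank_le hJt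

end Dictionary

section SparseVectors

open scoped Finset RealInnerProductSpace

variable {n : ℕ}

lemma l2norm_nonneg (z : Fin n → ℝ) : 0 ≤ l2norm z := Real.sqrt_nonneg _

lemma sq_l2norm (z : Fin n → ℝ) : l2norm z ^ 2 = ∑ i, z i ^ 2 :=
  Real.sq_sqrt (Finset.sum_nonneg fun _ _ ↦ sq_nonneg _)

lemma l2norm_single_one (i : Fin n) : l2norm (Pi.single i 1) = 1 := by
  simp [l2norm, Pi.single_apply, ite_pow]

lemma SparseVec.card_filter_le {t : ℕ} {z : Fin n → ℝ} (hz : SparseVec t z) :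
    #{i | z i ≠ 0} ≤ t := by
  rwa [SparseVec, Set.ncard_eq_toFinset_card', Set.toFinset_ofPred] at hz

lemma SparseVec.of_forall_eq_zero {t : ℕ} {v w : Fin n → ℝ} (hv : SparseVec t v)
    (h : ∀ i, v i = 0 → w i = 0) : SparseVec t w :=
  (Set.ncard_le_ncard fun i ↦ mt (h i)).trans hv

lemma SparseVec.l1norm_le {t : ℕ} {z : Fin n → ℝ} (hz : SparseVec t z) :
    l1norm z ≤ √t * l2norm z := by
  have l1norm_eq : l1norm z = ∑ i with z i ≠ 0, |z i| :=
    (Finset.sum_filter_of_ne fun i _ hi ↦ abs_ne_zero.1 hi).symm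
  rw [l2norm, ← Real.sqrt_mul (Nat.cast_nonneg t), l1norm_eq]
  refine Real.le_sqrt_of_sq_le ?_
  calc (∑ i with z i ≠ 0, |z i|) ^ 2
    _ ≤ #{i | z i ≠ 0} * ∑ i with z i ≠ 0, |z i| ^ 2 := sq_sum_le_card_mul_sum_sq
    _ ≤ t * ∑ i, |z i| ^ 2 := by
      gcongr
      · exact hz.card_filter_le
      · exact Finset.filter_subset _ _
    _ = t * ∑ i, z i ^ 2 := by simp only [sq_abs]

lemma sq_l2norm_piecewise_zero (S : Finset (Fin n)) (w : Fin n → ℝ) :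
    l2norm (S.piecewise 0 w) ^ 2 = ∑ i ∈ Sᶜ, w i ^ 2 := by
  simp [sq_l2norm, Finset.piecewise, ite_pow, Finset.sum_ite, Finset.filter_notMem_eq_sdiff,
    ← Finset.compl_eq_univ_sdiff]

lemma SparseVec.l2norm_piecewise_peel_le {t : ℕ} {V : Submodule ℝ (Fin n → ℝ)} {w x : Fin n → ℝ}
    (hw : SparseVec t w) (hx : x ∈ V) :
    l2norm ((peel (2 * t) V (t + 1)).piecewise 0 w) ≤ 2 * l2norm (w - x) := by
  have hpeel := sum_sq_compl_peel_le hw.card_filter_le (w := w) (by simp) hx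
  refine (sq_le_sq₀ (l2norm_nonneg _) (mul_nonneg two_pos.le (l2norm_nonneg _))).1 ?_
  rw [sq_l2norm_piecewise_zero, mul_pow, sq_l2norm]
  simp only [Pi.sub_apply]
  linarith [Finset.sum_nonneg fun i (_ : i ∈ Finset.univ) ↦ sq_nonneg (w i - x i)]

variable {E : Type*} [NormedAddCommGroup E] [InnerProductSpace ℝ E]

lemma abs_inner_map_le_mul_l1norm (φ : (Fin n → ℝ) →ₗ[ℝ] E) {y : E} {c : ℝ}
    (hc : ∀ i, |⟪y, φ (Pi.single i 1)⟫| ≤ c) (z : Fin n → ℝ) : |⟪y, φ z⟫| ≤ c * l1norm z := by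
  have expand : ⟪y, φ z⟫ = ∑ i, z i * ⟪y, φ (Pi.single i 1)⟫ := by
    conv_lhs => rw [pi_eq_sum_univ' z, map_sum, inner_sum]
    simp only [map_smul, real_inner_smul_right]
  rw [expand, l1norm, Finset.mul_sum]
  refine (Finset.abs_sum_le_sum_abs _ _).trans (Finset.sum_le_sum fun i _ ↦ ?_)
  rw [abs_mul, mul_comm]
  gcongr
  exact hc i

lemma SparseVec.abs_inner_map_le {φ : (Fin n → ℝ) →ₗ[ℝ] E} {b : ℝ}
    (hb : 0 ≤ b) (hup : ∀ z, ‖φ z‖ ≤ b * l2norm z) {y : E} {c : ℝ} (hc : 0 ≤ c)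
    (hsingle : ∀ i, |⟪y, φ (Pi.single i 1)⟫| ≤ c * ‖φ (Pi.single i 1)‖) {t : ℕ} {z : Fin n → ℝ}
    (hz : SparseVec t z) : |⟪y, φ z⟫| ≤ c * b * (√t * l2norm z) := by
  have hsingle' (i) : |⟪y, φ (Pi.single i 1)⟫| ≤ c * b := by
    refine (hsingle i).trans (mul_le_mul_of_nonneg_left ?_ hc)
    simpa [l2norm_single_one] using hup (Pi.single i 1)
  exact (abs_inner_map_le_mul_l1norm φ hsingle' z).trans
    (mul_le_mul_of_nonneg_left hz.l1norm_le (mul_nonneg hc hb))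

lemma sub_sub_piecewise_mem_supportedOn {S : Finset (Fin n)} {v u : Fin n → ℝ}
    (hu : u ∈ supportedOn {i ∈ S | v i ≠ 0}) :
    v - u - S.piecewise 0 v ∈ supportedOn {i ∈ S | v i ≠ 0} := by
  refine mem_supportedOn.2 fun i hi ↦ ?_
  have hui := mem_supportedOn.1 hu i hi
  by_cases hiS : i ∈ S <;> simp_all

lemma eq_zero_of_inner_sub_sub_eq_zero {v u z : E} {κ : ℝ} (horth : ⟪v - u, v - u - z⟫ = 0)
    (hu : 7 * ‖u‖ ≤ ‖v‖) (huz : 7 * (‖u‖ * ‖z‖) ≤ κ * ‖v‖) (hvz : 7 * ⟪v, z⟫ ≤ κ * ‖v‖)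
    (hκ : κ ≤ 2 * ‖v - u‖) : v = 0 := by
  have hsq : ‖v - u‖ ^ 2 = ⟪v, z⟫ - ⟪u, z⟫ := by
    rw [inner_sub_right, real_inner_self_eq_norm_sq, sub_eq_zero, inner_sub_left] at horth
    exact horth
  have huz' : -⟪u, z⟫ ≤ ‖u‖ * ‖z‖ := by
    rw [← inner_neg_right, ← norm_neg z]
    exact real_inner_le_norm u (-z)
  have hsmall : 7 * ‖v - u‖ ^ 2 ≤ 4 * ‖v‖ * ‖v - u‖ := by
    nlinarith [norm_nonneg v]
  have hlarge : ‖v‖ - ‖u‖ ≤ ‖v - u‖ := norm_sub_norm_le v u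
  by_contra hv
  have hv_pos := norm_pos_iff.2 hv
  nlinarith

end SparseVectors

section CoveringNumber

open scoped Finset RealInnerProductSpace

variable {n t : ℕ} {A : Matrix (Fin n) (Fin n) ℝ} {E : Type*} [NormedAddCommGroup E]
  [InnerProductSpace ℝ E] {φ : (Fin n → ℝ) →ₗ[ℝ] E}

lemma normSigma_eq_norm (hφ : ∀ x y, innerSigma A x y = ⟪φ x, φ y⟫) (x : Fin n → ℝ) :
    normSigma A x = ‖φ x‖ := by
  rw [normSigma, hφ, norm_eq_sqrt_real_inner]

lemma coveringNumber_le_card (hφ : ∀ x y, innerSigma A x y = ⟪φ x, φ y⟫) {α : ℝ}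
    {D : Finset (Fin n → ℝ)}
    (hD : ∀ v, SparseVec t v → (∀ b ∈ D, |⟪φ v, φ b⟫| ≤ α * ‖φ v‖ * ‖φ b‖) → φ v = 0) :
    coveringNumber t α A ≤ (#D : ℕ) := by
  refine sInf_le ⟨#D, fun k ↦ D.equivFin.symm k, fun v hv hv_pos ↦ ?_, rfl⟩
  rw [normSigma_eq_norm hφ, norm_pos_iff] at hv_pos
  obtain ⟨b, hbD, hb⟩ : ∃ b ∈ D, α * ‖φ v‖ * ‖φ b‖ < |⟪φ v, φ b⟫| := by
    by_contra! h
    exact hv_pos (hD v hv h)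
  refine ⟨D.equivFin ⟨b, hbD⟩, ?_⟩
  simp only [Equiv.symm_apply_apply, normSigma_eq_norm hφ, hφ, ← mul_assoc]
  refine ⟨norm_pos_iff.2 fun h0 ↦ ?_, hb.le⟩
  simp [h0] at hb

lemma SparseVec.map_eq_zero {a b α : ℝ} {S : Finset (Fin n)} {v u : Fin n → ℝ}
    (hv : SparseVec t v) (hb : 0 ≤ b) (hα₀ : 0 ≤ α) (hα : 7 * (√t * α) ≤ 1)
    (hαb : 7 * (√t * α * b) ≤ a) (hup : ∀ z, ‖φ z‖ ≤ b * l2norm z)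
    (hS : ∀ w, SparseVec t w → a * l2norm (S.piecewise 0 w) ≤ 2 * ‖φ w‖)
    (hsingle : ∀ i, |⟪φ v, φ (Pi.single i 1)⟫| ≤ α * ‖φ v‖ * ‖φ (Pi.single i 1)‖)
    (hu : u ∈ supportedOn {i ∈ S | v i ≠ 0})
    (horth : ∀ z ∈ supportedOn {i ∈ S | v i ≠ 0}, ⟪φ v - φ u, φ z⟫ = 0)
    (hbound : ‖φ u‖ ≤ √t * (α * ‖φ v‖)) : φ v = 0 := by
  set z := S.piecewise 0 v
  have hu_zero (i) (hi : i ∉ S ∨ v i = 0) : u i = 0 :=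
    mem_supportedOn.1 hu i (by simpa [imp_iff_not_or] using hi)
  have hw : SparseVec t (v - u) := hv.of_forall_eq_zero fun i hi ↦ by simp [hi, hu_zero]
  have hz : SparseVec t z := hv.of_forall_eq_zero fun i hi ↦ by simp [z, Finset.piecewise, hi]
  have hwz : S.piecewise 0 (v - u) = z := Finset.piecewise_congr _ (fun _ _ ↦ rfl)
    fun i hi ↦ by simp [hu_zero i (Or.inl hi)]
  have hκ : 0 ≤ ‖φ v‖ * l2norm z := mul_nonneg (norm_nonneg _) (l2norm_nonneg z)
  refine eq_zero_of_inner_sub_sub_eq_zero (u := φ u) (z := φ z) (κ := a * l2norm z) ?_ ?_ ?_ ?_ ?_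
  · simpa only [map_sub] using horth _ (sub_sub_piecewise_mem_supportedOn hu)
  · nlinarith [norm_nonneg (φ v)]
  · have norm_mul_norm_le := mul_le_mul hbound (hup z) (norm_nonneg _) (by positivity)
    nlinarith
  · have inner_le := (le_abs_self _).trans
      (hz.abs_inner_map_le hb hup (mul_nonneg hα₀ (norm_nonneg (φ v))) hsingle)
    nlinarith
  · simpa only [map_sub, hwz] using hS _ hw

theorem coveringNumber_le_of_subspace (hφ : ∀ x y, innerSigma A x y = ⟪φ x, φ y⟫) {a b α : ℝ}
    {V : Submodule ℝ (Fin n → ℝ)} (hb : 0 ≤ b) (hα₀ : 0 ≤ α) (hα : 7 * (√t * α) ≤ 1)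
    (hαb : 7 * (√t * α * b) ≤ a) (hup : ∀ z, ‖φ z‖ ≤ b * l2norm z)
    (hlow : ∀ w, ∃ x ∈ V, a * l2norm (w - x) ≤ ‖φ w‖) :
    coveringNumber t α A ≤ (((t + 1) * (2 * t * Module.finrank ℝ V)) ^ t * t + n : ℕ) := by
  have ha : 0 ≤ a := le_trans (by positivity) hαb
  obtain ⟨D, card_D, hD⟩ := exists_finset_card_le_pow_mul φ (peel (2 * t) V (t + 1)) t
  refine (coveringNumber_le_card (D := D ∪ Finset.univ.image (Pi.single · 1)) hφ
    fun v hv hsmall ↦ ?_).trans (Nat.cast_le.2 ?_)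
  · have hS (w) (hw : SparseVec t w) :
        a * l2norm ((peel (2 * t) V (t + 1)).piecewise 0 w) ≤ 2 * ‖φ w‖ := by
      obtain ⟨x, hxV, hx⟩ := hlow w
      linarith [mul_le_mul_of_nonneg_left (hw.l2norm_piecewise_peel_le hxV) ha]
    have hsmall_D (b) (hb : b ∈ D) := hsmall b (Finset.mem_union_left _ hb)
    have hsmall_single (i) := hsmall (Pi.single i 1)
      (Finset.mem_union_right _ (Finset.mem_image_of_mem _ (Finset.mem_univ i)))
    have card_J : #{i ∈ peel (2 * t) V (t + 1) | v i ≠ 0} ≤ t :=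
      (Finset.card_le_card (Finset.filter_subset_filter _ (Finset.subset_univ _))).trans
        hv.card_filter_le
    obtain ⟨u, hu, horth, hbound⟩ := hD _ (Finset.filter_subset _ _) card_J (φ v)
    exact hv.map_eq_zero hb hα₀ hα hαb hup hS hsmall_single hu horth
      (hbound _ (mul_nonneg hα₀ (norm_nonneg _)) hsmall_D)
  · refine (Finset.card_union_le _ _).trans (add_le_add (card_D.trans ?_) ?_)
    · gcongr
      exact card_peel_le _ _ _
    · exact Finset.card_image_le.trans_eq (Finset.card_fin n)

end CoveringNumber

section Spectral

open scoped Finset RealInnerProductSpace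

variable {n : ℕ} {A : Matrix (Fin n) (Fin n) ℝ}

/-- The square root of `A` in eigenvector coordinates, a linear map whose Gram matrix is `A` when
all eigenvalues are nonnegative. -/
def eigenMap (hA : A.IsHermitian) : (Fin n → ℝ) →ₗ[ℝ] EuclideanSpace ℝ (Fin n) :=
  (WithLp.linearEquiv 2 ℝ (Fin n → ℝ)).symm ∘ₗ LinearMap.pi fun i ↦
    √(hA.eigenvalues i) • (innerₗ _ (hA.eigenvectorBasis i)) ∘ₗ
      (WithLp.linearEquiv 2 ℝ (Fin n → ℝ)).symm

lemma eigenMap_apply (hA : A.IsHermitian) (x : Fin n → ℝ) (i : Fin n) :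
    eigenMap hA x i = √(hA.eigenvalues i) * ⟪hA.eigenvectorBasis i, WithLp.toLp 2 x⟫ := rfl

lemma inner_eigenvectorBasis_mulVec (hA : A.IsHermitian) (y : Fin n → ℝ) (i : Fin n) :
    ⟪hA.eigenvectorBasis i, WithLp.toLp 2 (A *ᵥ y)⟫ =
      hA.eigenvalues i * ⟪hA.eigenvectorBasis i, WithLp.toLp 2 y⟫ := by
  simp only [EuclideanSpace.inner_eq_star_dotProduct, star_trivial]
  rw [dotProduct_comm, dotProduct_mulVec, ← mulVec_transpose,
    ← conjTranspose_eq_transpose_of_trivial, hA.eq, hA.mulVec_eigenvectorBasis, smul_dotProduct,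
    smul_eq_mul, dotProduct_comm]

lemma innerSigma_eq_inner_eigenMap (hA : A.PosSemidef) (x y : Fin n → ℝ) :
    innerSigma A x y = ⟪eigenMap hA.1 x, eigenMap hA.1 y⟫ := by
  have hsum : innerSigma A x y = ∑ i, ⟪WithLp.toLp 2 x, hA.1.eigenvectorBasis i⟫ *
      ⟪hA.1.eigenvectorBasis i, WithLp.toLp 2 (A *ᵥ y)⟫ := by
    rw [OrthonormalBasis.sum_inner_mul_inner, EuclideanSpace.inner_toLp_toLp, innerSigma,
      star_trivial, dotProduct_comm]
  rw [hsum, PiLp.inner_apply]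
  refine Finset.sum_congr rfl fun i _ ↦ ?_
  rw [eigenMap_apply, eigenMap_apply, inner_eigenvectorBasis_mulVec, real_inner_comm]
  have sqrt_mul_sqrt := Real.mul_self_sqrt (hA.eigenvalues_nonneg i)
  simp only [RCLike.inner_apply, conj_trivial]
  linear_combination (-⟪hA.1.eigenvectorBasis i, WithLp.toLp 2 x⟫ *
    ⟪hA.1.eigenvectorBasis i, WithLp.toLp 2 y⟫) * sqrt_mul_sqrt

lemma l2norm_eq_norm_toLp (x : Fin n → ℝ) : l2norm x = ‖WithLp.toLp 2 x‖ := by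
  simp [l2norm, EuclideanSpace.norm_eq]

lemma sq_norm_eigenMap (hA : A.PosSemidef) (x : Fin n → ℝ) : ‖eigenMap hA.1 x‖ ^ 2 =
    ∑ i, hA.1.eigenvalues i * ⟪hA.1.eigenvectorBasis i, WithLp.toLp 2 x⟫ ^ 2 := by
  simp only [EuclideanSpace.real_norm_sq_eq, eigenMap_apply, mul_pow,
    Real.sq_sqrt (hA.eigenvalues_nonneg _)]

lemma norm_eigenMap_le (hA : A.PosSemidef) {L : ℝ} (hL : ∀ i, hA.1.eigenvalues i ≤ L)
    (x : Fin n → ℝ) : ‖eigenMap hA.1 x‖ ≤ √L * l2norm x := by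
  rw [l2norm_eq_norm_toLp, ← Real.sqrt_sq (norm_nonneg (WithLp.toLp 2 x)),
    ← Real.sqrt_mul' _ (sq_nonneg _)]
  refine Real.le_sqrt_of_sq_le ?_
  rw [sq_norm_eigenMap hA, ← hA.1.eigenvectorBasis.sum_sq_inner_right, Finset.mul_sum]
  gcongr with i
  exact hL i

lemma exists_submodule_forall_exists_inner_sub_eq {κ H : Type*} [Fintype κ] [DecidableEq κ]
    [NormedAddCommGroup H] [InnerProductSpace ℝ H] (q : OrthonormalBasis κ ℝ H) (I : Finset κ) :
    ∃ W : Submodule ℝ H, Module.finrank ℝ W ≤ #I ∧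
      ∀ w, ∃ x ∈ W, ∀ i, ⟪q i, w - x⟫ = if i ∈ I then 0 else ⟪q i, w⟫ := by
  classical
  refine ⟨.span ℝ (I.image q), (finrank_span_finset_le_card _).trans Finset.card_image_le,
    fun w ↦ ⟨∑ i ∈ I, ⟪q i, w⟫ • q i, ?_, fun i ↦ ?_⟩⟩
  · refine Submodule.sum_mem _ fun i hi ↦ Submodule.smul_mem _ _ (Submodule.subset_span ?_)
    exact Finset.mem_image_of_mem q hi
  · by_cases hi : i ∈ I <;>
      simp [inner_sub_right, inner_sum, real_inner_smul_right, q.inner_eq_ite, hi]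

lemma exists_submodule_forall_exists_le_norm_eigenMap (hA : A.PosSemidef) {l : ℝ} (hl : 0 ≤ l) :
    ∃ V : Submodule ℝ (Fin n → ℝ), Module.finrank ℝ V ≤ #{i | hA.1.eigenvalues i < l} ∧
      ∀ w, ∃ x ∈ V, √l * l2norm (w - x) ≤ ‖eigenMap hA.1 w‖ := by
  let q := hA.1.eigenvectorBasis
  obtain ⟨W, finrank_W, hW⟩ :=
    exists_submodule_forall_exists_inner_sub_eq q {i | hA.1.eigenvalues i < l}
  refine ⟨W.map (WithLp.linearEquiv 2 ℝ (Fin n → ℝ)).toLinearMap,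
    (W.finrank_map_le _).trans finrank_W, fun w ↦ ?_⟩
  obtain ⟨x, hxW, hx⟩ := hW (WithLp.toLp 2 w)
  refine ⟨WithLp.ofLp x, Submodule.mem_map_of_mem hxW, ?_⟩
  refine (sq_le_sq₀ (mul_nonneg (Real.sqrt_nonneg l) (l2norm_nonneg _)) (norm_nonneg _)).1 ?_
  rw [mul_pow, Real.sq_sqrt hl, l2norm_eq_norm_toLp, WithLp.toLp_sub, WithLp.toLp_ofLp,
    sq_norm_eigenMap hA, ← q.sum_sq_inner_right, Finset.mul_sum]
  refine Finset.sum_le_sum fun i _ ↦ ?_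
  rw [hx i]
  split_ifs with hi
  · simpa using mul_nonneg (hA.eigenvalues_nonneg i) (sq_nonneg _)
  · have : l ≤ hA.1.eigenvalues i := by simpa using hi
    gcongr

end Spectral

section Counting

open scoped Finset

lemma card_filter_comp_lt_le_of_monotone {ι β : Type*} [Fintype ι] [LinearOrder β] {n : ℕ}
    {f : Fin n → β} (hf : Monotone f) {e : ι → Fin n} (he : Function.Injective e) (d : Fin n) :
    #{i | f (e i) < f d} ≤ d := by
  rw [← Fin.card_Iio]
  refine Finset.card_le_card_of_injOn e (fun i hi ↦ ?_) he.injOn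
  exact Finset.mem_coe.2 (Finset.mem_Iio.2 (hf.reflect_lt (by simpa using hi)))

lemma pow_mul_le_mul_pow {t r d : ℕ} (ht : 1 ≤ t) (hr : r ≤ d) :
    ((t + 1) * (2 * t * r)) ^ t * t ≤ t * (7 * t) ^ (2 * t ^ 2 + t) * d ^ t := by
  have hbase : (t + 1) * (2 * t) ≤ (7 * t) ^ (2 * t + 1) := calc
    (t + 1) * (2 * t) ≤ (7 * t) ^ 2 := by nlinarith
    _ ≤ (7 * t) ^ (2 * t + 1) := Nat.pow_le_pow_right (by lia) (by lia)
  calc ((t + 1) * (2 * t * r)) ^ t * t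
    _ = t * ((t + 1) * (2 * t)) ^ t * r ^ t := by rw [← mul_assoc (t + 1), mul_pow _ r]; ring
    _ ≤ t * ((7 * t) ^ (2 * t + 1)) ^ t * d ^ t := by gcongr
    _ = t * (7 * t) ^ (2 * t ^ 2 + t) * d ^ t := by rw [← pow_mul]; ring_nf

end Counting

/-- covering number bound for Σ with few small eigenvalues. `lam` enumerates
the eigenvalues of Σ in nondecreasing order. -/
theorem stmt6 (n t d : ℕ) (ht : 1 ≤ t) (hd : d + 1 ≤ n)
    (A : Matrix (Fin n) (Fin n) ℝ) (hA : A.PosSemidef)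
    (lam : Fin n → ℝ) (hmono : Monotone lam)
    (g : Fin n ≃ Fin n) (hg : lam = hA.1.eigenvalues ∘ g)
    (hpos : 0 < lam ⟨n - 1, by omega⟩) :
    coveringNumber t
        ((1 / (7 * Real.sqrt t)) * Real.sqrt (lam ⟨d, by omega⟩ / lam ⟨n - 1, by omega⟩)) A
      ≤ ((t * (7 * t) ^ (2 * t ^ 2 + t) * d ^ t + n : ℕ) : ℝ≥0∞) := by
  have eig_eq (i) : hA.1.eigenvalues i = lam (g.symm i) := by simp [hg]
  set l := lam ⟨d, by omega⟩
  set L := lam ⟨n - 1, by omega⟩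
  have hl : 0 ≤ l := by simpa [l, hg] using hA.eigenvalues_nonneg (g ⟨d, by omega⟩)
  have eig_le_L (i) : hA.1.eigenvalues i ≤ L :=
    (eig_eq i).trans_le (hmono (Fin.le_def.2 (Nat.le_pred_of_lt (g.symm i).2)))
  obtain ⟨V, finrank_V, hV⟩ := exists_submodule_forall_exists_le_norm_eigenMap hA hl
  have finrank_le : Module.finrank ℝ V ≤ d := finrank_V.trans <| by
    simpa only [eig_eq] using card_filter_comp_lt_le_of_monotone hmono g.symm.injective ⟨d, hd⟩
  have cancel (x : ℝ) : 7 * (√t * (1 / (7 * √t) * x)) = x := by field_simp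
  refine (coveringNumber_le_of_subspace (innerSigma_eq_inner_eigenMap hA) (Real.sqrt_nonneg L)
    (by positivity) ?_ ?_ (norm_eigenMap_le hA eig_le_L) hV).trans (Nat.cast_le.2 ?_)
  · rw [cancel, Real.sqrt_le_one]
    exact div_le_one_of_le₀ (hmono (Fin.mk_le_mk.2 (by omega))) hpos.le
  · rw [Real.sqrt_div hl, ← mul_assoc, cancel, div_mul_cancel₀ _ (Real.sqrt_pos.2 hpos).ne']
  · exact Nat.add_le_add_right (pow_mul_le_mul_pow ht finrank_le) n
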